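/- Second-order relations: let m_e > 0, τ_i ≥ 0 and c > 0 satisfy c²(1 + m_e) = 1 + τ_i, and set κ = (c²m_e − 1)²/(2c(1 + m_e)). Let n¹, n₊², n₋², v₊², v₋², φ² : ℝ × ℝ → ℝ be smooth, define v¹ = c·n¹ and φ¹ = (c² − τ_i)·n¹, and suppose equations (a)–(e) of the order-ε² system hold (as in the KdV derivation): ∂_T n¹ + ∂_Y v₊² + ∂_Y(n¹v¹) − c∂_Y n₊² = 0; ∂_T n¹ + ∂_Y v₋² + ∂_Y(n¹v¹) − c∂_Y n₋² = 0; τ_i ∂_Y(n₊² − (1/2)(n¹)²) + ∂_T v¹ + v¹∂_Y v¹ − c∂_Y v₊² + ∂_Y φ² = 0; ∂_Y(n₋² − (1/2)(n¹)²) + m_e(∂_T v¹ + v¹∂_Y v¹ − c∂_Y v₋²) − ∂_Y φ² = 0; ∂_Y²φ¹ + n₊² − n₋² = 0. Assume moreover that n¹ satisfies the KdV equation ∂_T n¹ + c·n¹∂_Y n¹ + κ∂_Y³n¹ = 0, and that for each fixed T the functions Y ↦ v₊²(Y,T), n₊²(Y,T), n¹(Y,T), ∂_Y n¹(Y,T),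 ∂_Y² n¹(Y,T) all tend to 0 as Y → +∞. Then on ℝ × ℝ: n₋² = n₊² + (c² − τ_i)∂_Y² n¹ and v₊² = c·n₊² + κ·∂_Y² n¹ − (c/2)(n¹)². -/

import Mathlib

open Filter

/-- Partial derivative in the first (spatial) variable `Y` of a curried function. -/
noncomputable def dY (f : ℝ → ℝ → ℝ) : ℝ → ℝ → ℝ :=
  fun Y T => deriv (fun y => f y T) Y

/-- Partial derivative in the second (time) variable `T` of a curried function. -/
noncomputable def dT (f : ℝ → ℝ → ℝ) : ℝ → ℝ → ℝ :=
  fun Y T => deriv (fun s => f Y s) T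

/-!
Poisson's equation (e) is pointwise linear and gives the relation for `n₋²` at once. For `v₊²`,
the continuity equation (a) and the KdV equation express the same `∂_T n¹`; eliminating it leaves
the exact `Y`-derivative `∂_Y (v₊² - c n₊² - κ ∂_Y² n¹ + (c/2) (n¹)²) = 0`, and the decay at
infinity fixes the constant of integration to be `0`.
-/

open Topology

theorem eq_of_hasDerivAt_eq_of_tendsto {𝕜 E : Type*} [RCLike 𝕜] [NormedAddCommGroup E]
    [NormedSpace 𝕜 E] {f g f' : 𝕜 → E} {a : E} {l : Filter 𝕜} [l.NeBot]
    (hf : ∀ x, HasDerivAt f (f' x) x) (hg : ∀ x, HasDerivAt g (f' x) x)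
    (hfa : Tendsto f l (𝓝 a)) (hga : Tendsto g l (𝓝 a)) : f = g := by
  have hderiv : ∀ x, HasDerivAt (f - g) 0 x := fun x => by
    simpa only [sub_self] using (hf x).sub (hg x)
  have hconst : ∀ x y, (f - g) x = (f - g) y :=
    is_const_of_deriv_eq_zero (fun x => (hderiv x).differentiableAt) fun x => (hderiv x).deriv
  have hlim : Tendsto (f - g) l (𝓝 0) := sub_self a ▸ hfa.sub hga
  funext x
  have hzero : (f - g) x = 0 :=
    tendsto_nhds_unique (tendsto_const_nhds.congr fun y => hconst x y) hlim
  exact sub_eq_zero.mp hzero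

section PartialDerivative

variable {f g : ℝ → ℝ → ℝ} {Y T : ℝ}

theorem hasDerivAt_dY (hf : DifferentiableAt ℝ (fun y => f y T) Y) :
    HasDerivAt (fun y => f y T) (dY f Y T) Y :=
  hf.hasDerivAt

theorem dY_const_mul (a : ℝ) (f : ℝ → ℝ → ℝ) :
    dY (fun y s => a * f y s) = fun y s => a * dY f y s := by
  funext y s
  exact deriv_const_mul_field a

theorem dY_mul (hf : DifferentiableAt ℝ (fun y => f y T) Y)
    (hg : DifferentiableAt ℝ (fun y => g y T) Y) :
    dY (fun y s => f y s * g y s) Y T = dY f Y T * g Y T + f Y T * dY g Y T :=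
  deriv_fun_mul hf hg

theorem contDiff_slice_fst {n : WithTop ℕ∞} (hf : ContDiff ℝ n fun p : ℝ × ℝ => f p.1 p.2)
    (T : ℝ) : ContDiff ℝ n fun y => f y T :=
  hf.comp (contDiff_prodMk_left T)

theorem contDiff_dY {n : ℕ} (hf : ContDiff ℝ (n + 1) fun y => f y T) :
    ContDiff ℝ n fun y => dY f y T :=
  hf.deriv'

end PartialDerivative

section SecondOrderRelations

variable {c κ : ℝ} {n1 np2 nm2 vp2 : ℝ → ℝ → ℝ}

theorem electron_density_eq_of_poisson {α Y T : ℝ}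
    (hpoisson : dY (dY fun y s => α * n1 y s) Y T + np2 Y T - nm2 Y T = 0) :
    nm2 Y T = np2 Y T + α * dY (dY n1) Y T := by
  simp only [dY_const_mul] at hpoisson
  linarith

theorem dY_ion_velocity_eq_of_continuity_of_kdv {Y T : ℝ}
    (hn1 : DifferentiableAt ℝ (fun y => n1 y T) Y)
    (hcontinuity : dT n1 Y T + dY vp2 Y T + dY (fun y s => n1 y s * (c * n1 y s)) Y T
      - c * dY np2 Y T = 0)
    (hkdv : dT n1 Y T + c * n1 Y T * dY n1 Y T + κ * dY (dY (dY n1)) Y T = 0) :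
    dY vp2 Y T = c * dY np2 Y T + κ * dY (dY (dY n1)) Y T - c * n1 Y T * dY n1 Y T := by
  rw [dY_mul hn1 (hn1.const_mul c), dY_const_mul] at hcontinuity
  linarith

theorem ion_velocity_eq_of_continuity_of_kdv {T : ℝ} {l : Filter ℝ} [l.NeBot]
    (hn1 : ContDiff ℝ 3 fun y => n1 y T)
    (hnp2 : Differentiable ℝ fun y => np2 y T)
    (hvp2 : Differentiable ℝ fun y => vp2 y T)
    (hcontinuity : ∀ Y, dT n1 Y T + dY vp2 Y T + dY (fun y s => n1 y s * (c * n1 y s)) Y T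
      - c * dY np2 Y T = 0)
    (hkdv : ∀ Y, dT n1 Y T + c * n1 Y T * dY n1 Y T + κ * dY (dY (dY n1)) Y T = 0)
    (hdecay_vp2 : Tendsto (fun Y => vp2 Y T) l (𝓝 0))
    (hdecay_np2 : Tendsto (fun Y => np2 Y T) l (𝓝 0))
    (hdecay_n1 : Tendsto (fun Y => n1 Y T) l (𝓝 0))
    (hdecay_ddn1 : Tendsto (fun Y => dY (dY n1) Y T) l (𝓝 0)) (Y : ℝ) :
    vp2 Y T = c * np2 Y T + κ * dY (dY n1) Y T - (c / 2) * n1 Y T ^ 2 := by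
  have hn1_diff : Differentiable ℝ fun y => n1 y T := hn1.differentiable (by norm_num)
  have hddn1_diff : Differentiable ℝ fun y => dY (dY n1) y T :=
    (contDiff_dY (n := 1) (contDiff_dY (n := 2) hn1)).differentiable one_ne_zero
  have hvp2_deriv (y : ℝ) : HasDerivAt (fun y => vp2 y T)
      (c * dY np2 y T + κ * dY (dY (dY n1)) y T - c * n1 y T * dY n1 y T) y :=
    (hasDerivAt_dY (hvp2 y)).congr_deriv
      (dY_ion_velocity_eq_of_continuity_of_kdv (hn1_diff y) (hcontinuity y) (hkdv y))
  have hrhs_deriv (y : ℝ) : HasDerivAt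
      (fun y => c * np2 y T + κ * dY (dY n1) y T - (c / 2) * n1 y T ^ 2)
      (c * dY np2 y T + κ * dY (dY (dY n1)) y T - c * n1 y T * dY n1 y T) y := by
    have hsq := ((hasDerivAt_dY (hn1_diff y)).fun_pow 2).const_mul (c / 2)
    refine ((((hasDerivAt_dY (hnp2 y)).const_mul c).fun_add
      ((hasDerivAt_dY (hddn1_diff y)).const_mul κ)).fun_sub hsq).congr_deriv ?_
    ring
  have hrhs_lim : Tendsto (fun y => c * np2 y T + κ * dY (dY n1) y T - (c / 2) * n1 y T ^ 2)
      l (𝓝 0) := by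
    simpa using ((hdecay_np2.const_mul c).add (hdecay_ddn1.const_mul κ)).sub
      ((hdecay_n1.pow 2).const_mul (c / 2))
  exact congrFun (eq_of_hasDerivAt_eq_of_tendsto hvp2_deriv hrhs_deriv hdecay_vp2 hrhs_lim) Y

theorem second_order_relations_EP_general {α : ℝ} {l : Filter ℝ} [l.NeBot]
    (hn1 : ContDiff ℝ 3 fun p : ℝ × ℝ => n1 p.1 p.2)
    (hnp2 : ∀ T, Differentiable ℝ fun Y => np2 Y T)
    (hvp2 : ∀ T, Differentiable ℝ fun Y => vp2 Y T)
    (hcontinuity : ∀ Y T, dT n1 Y T + dY vp2 Y T + dY (fun y s => n1 y s * (c * n1 y s)) Y T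
      - c * dY np2 Y T = 0)
    (hpoisson : ∀ Y T, dY (dY fun y s => α * n1 y s) Y T + np2 Y T - nm2 Y T = 0)
    (hkdv : ∀ Y T, dT n1 Y T + c * n1 Y T * dY n1 Y T + κ * dY (dY (dY n1)) Y T = 0)
    (hdecay_vp2 : ∀ T, Tendsto (fun Y => vp2 Y T) l (𝓝 0))
    (hdecay_np2 : ∀ T, Tendsto (fun Y => np2 Y T) l (𝓝 0))
    (hdecay_n1 : ∀ T, Tendsto (fun Y => n1 Y T) l (𝓝 0))
    (hdecay_ddn1 : ∀ T, Tendsto (fun Y => dY (dY n1) Y T) l (𝓝 0)) (Y T : ℝ) :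
    nm2 Y T = np2 Y T + α * dY (dY n1) Y T ∧
      vp2 Y T = c * np2 Y T + κ * dY (dY n1) Y T - (c / 2) * n1 Y T ^ 2 :=
  ⟨electron_density_eq_of_poisson (hpoisson Y T),
    ion_velocity_eq_of_continuity_of_kdv (contDiff_slice_fst hn1 T) (hnp2 T) (hvp2 T)
      (hcontinuity · T) (hkdv · T) (hdecay_vp2 T) (hdecay_np2 T) (hdecay_n1 T) (hdecay_ddn1 T) Y⟩

end SecondOrderRelations

theorem second_order_relations_EP
    (me τ c : ℝ) (hme : 0 < me) (hτ : 0 ≤ τ) (hc : 0 < c)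
    (hsound : c ^ 2 * (1 + me) = 1 + τ)
    (κ : ℝ) (hκ : κ = (c ^ 2 * me - 1) ^ 2 / (2 * c * (1 + me)))
    (n1 np2 nm2 vp2 vm2 φ2 : ℝ → ℝ → ℝ)
    (hn1 : ContDiff ℝ (⊤ : ℕ∞) (fun p : ℝ × ℝ => n1 p.1 p.2))
    (hnp2 : ContDiff ℝ (⊤ : ℕ∞) (fun p : ℝ × ℝ => np2 p.1 p.2))
    (hnm2 : ContDiff ℝ (⊤ : ℕ∞) (fun p : ℝ × ℝ => nm2 p.1 p.2))
    (hvp2 : ContDiff ℝ (⊤ : ℕ∞) (fun p : ℝ × ℝ => vp2 p.1 p.2))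
    (hvm2 : ContDiff ℝ (⊤ : ℕ∞) (fun p : ℝ × ℝ => vm2 p.1 p.2))
    (hφ2 : ContDiff ℝ (⊤ : ℕ∞) (fun p : ℝ × ℝ => φ2 p.1 p.2))
    (v1 φ1 : ℝ → ℝ → ℝ)
    (hv1 : v1 = fun Y T => c * n1 Y T)
    (hφ1 : φ1 = fun Y T => (c ^ 2 - τ) * n1 Y T)
    (ha : ∀ Y T : ℝ,
      dT n1 Y T + dY vp2 Y T + dY (fun y s => n1 y s * v1 y s) Y T
        - c * dY np2 Y T = 0)
    (hb : ∀ Y T : ℝ,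
      dT n1 Y T + dY vm2 Y T + dY (fun y s => n1 y s * v1 y s) Y T
        - c * dY nm2 Y T = 0)
    (hcc : ∀ Y T : ℝ,
      τ * dY (fun y s => np2 y s - (1 / 2) * (n1 y s) ^ 2) Y T
        + dT v1 Y T + v1 Y T * dY v1 Y T - c * dY vp2 Y T + dY φ2 Y T = 0)
    (hd : ∀ Y T : ℝ,
      dY (fun y s => nm2 y s - (1 / 2) * (n1 y s) ^ 2) Y T
        + me * (dT v1 Y T + v1 Y T * dY v1 Y T - c * dY vm2 Y T)
        - dY φ2 Y T = 0)
    (he : ∀ Y T : ℝ, dY (dY φ1) Y T + np2 Y T - nm2 Y T = 0)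
    (hkdv : ∀ Y T : ℝ,
      dT n1 Y T + c * n1 Y T * dY n1 Y T + κ * dY (dY (dY n1)) Y T = 0)
    (hdecay_vp2 : ∀ T : ℝ, Tendsto (fun Y => vp2 Y T) atTop (nhds 0))
    (hdecay_np2 : ∀ T : ℝ, Tendsto (fun Y => np2 Y T) atTop (nhds 0))
    (hdecay_n1 : ∀ T : ℝ, Tendsto (fun Y => n1 Y T) atTop (nhds 0))
    (hdecay_dn1 : ∀ T : ℝ, Tendsto (fun Y => dY n1 Y T) atTop (nhds 0))
    (hdecay_ddn1 : ∀ T : ℝ, Tendsto (fun Y => dY (dY n1) Y T) atTop (nhds 0)) :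
    ∀ Y T : ℝ,
      nm2 Y T = np2 Y T + (c ^ 2 - τ) * dY (dY n1) Y T ∧
      vp2 Y T = c * np2 Y T + κ * dY (dY n1) Y T - (c / 2) * (n1 Y T) ^ 2 := by
  subst hv1 hφ1
  exact second_order_relations_EP_general (hn1.of_le (by norm_cast))
    (fun T => (contDiff_slice_fst hnp2 T).differentiable (by simp))
    (fun T => (contDiff_slice_fst hvp2 T).differentiable (by simp))
    ha he hkdv hdecay_vp2 hdecay_np2 hdecay_n1 hdecay_ddn1
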